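/- For every binary quartic f = a·z_1⁴ + 4b·z_1³z_2 + 6c·z_1²z_2² + 4d·z_1z_2³ + e·z_2⁴ ∈ ℂ[z_1,z_2], the following identities hold: I2(H(f)) = 2⁶·3³·I2(f)², I3(H(f)) = 2¹⁰·3⁶·I3(f)² − 2⁹·3³·I2(f)³, and H(H(f)) = 2¹⁰·3⁶·I3(f)·f − 2⁶·3³·I2(f)·H(f) as polynomials in ℂ[z_1,z_2]. -/

import Mathlib

/-! The Hessian of the quartic with coefficients `(a, b, c, d, e)` is again a quartic, with
explicit coefficients quadratic in `a, b, c, d, e` (`hess_quartic`), since the second derivatives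
of the form are `12` times the quadratic forms with coefficients `(a, b, c)`, `(b, c, d)` and
`(c, d, e)`. Reading off coefficients (`I2_quartic`, `I3_quartic`) and applying `hess_quartic`
twice turns each of the three claims into a polynomial identity in `a, b, c, d, e` (and the two
variables). -/

open MvPolynomial

noncomputable section

/-- Binary forms: polynomials in two variables over ℂ. -/
abbrev P2 := MvPolynomial (Fin 2) ℂ

/-- The coefficient of `z_1^i z_2^j` in a binary form. -/
def cf (f : P2) (i j : ℕ) : ℂ :=
  coeff (Finsupp.single 0 i + Finsupp.single 1 j) f

/-- The invariant `I2(f) = ae − 4bd + 3c²` of a binary quartic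
`f = a·z_1⁴ + 4b·z_1³z_2 + 6c·z_1²z_2² + 4d·z_1z_2³ + e·z_2⁴`. -/
def I2 (f : P2) : ℂ :=
  cf f 4 0 * cf f 0 4 - 4 * (cf f 3 1 / 4) * (cf f 1 3 / 4) + 3 * (cf f 2 2 / 6) ^ 2

/-- The invariant `I3(f) = ace + 2bcd − ad² − b²e − c³` (the catalecticant). -/
def I3 (f : P2) : ℂ :=
  cf f 4 0 * (cf f 2 2 / 6) * cf f 0 4 +
    2 * (cf f 3 1 / 4) * (cf f 2 2 / 6) * (cf f 1 3 / 4) -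
    cf f 4 0 * (cf f 1 3 / 4) ^ 2 - (cf f 3 1 / 4) ^ 2 * cf f 0 4 - (cf f 2 2 / 6) ^ 3

/-- The discriminant `Δ(f) = I2(f)³ − 27·I3(f)²` of a binary quartic. -/
def disc (f : P2) : ℂ := I2 f ^ 3 - 27 * I3 f ^ 2

/-- The Hessian determinant `H(f) = f_{11}f_{22} − f_{12}²`. -/
def hess (f : P2) : P2 :=
  pderiv 0 (pderiv 0 f) * pderiv 1 (pderiv 1 f) - pderiv 0 (pderiv 1 f) ^ 2

/-- The Jacobian ideal `J(f) = (f_1, f_2)`. -/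
def jac (f : P2) : Ideal P2 := Ideal.span {pderiv 0 f, pderiv 1 f}

/-- The binary quartic `a·z_1⁴ + 4b·z_1³z_2 + 6c·z_1²z_2² + 4d·z_1z_2³ + e·z_2⁴`. -/
def quartic (a b c d e : ℂ) : P2 :=
  MvPolynomial.C a * X 0 ^ 4 + MvPolynomial.C (4 * b) * X 0 ^ 3 * X 1 +
    MvPolynomial.C (6 * c) * X 0 ^ 2 * X 1 ^ 2 + MvPolynomial.C (4 * d) * X 0 * X 1 ^ 3 +
    MvPolynomial.C e * X 1 ^ 4

/-- The associated quartic `A_f := Σ_{i+j=4} (24/(i!·j!))·μ_{ij}·z_1^i z_2^j`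
built from scalars `μ_{ij}`. -/
def assocQuartic (μ : ℕ → ℕ → ℂ) : P2 :=
  ∑ i ∈ Finset.range 5,
    MvPolynomial.C ((24 : ℂ) / ((i.factorial : ℂ) * ((4 - i).factorial : ℂ))) *
      MvPolynomial.C (μ i (4 - i)) * X 0 ^ i * X 1 ^ (4 - i)

/-- The substitution `(z_1, z_2) ↦ (−z_2, z_1)`, i.e. `g ↦ g(−z_2, z_1)`. -/
def twist (g : P2) : P2 := aeval ![-(X 1 : P2), X 0] g

lemma cf_quartic_term (r : ℂ) (m n i j : ℕ) :
    cf (MvPolynomial.C r * X 0 ^ m * X 1 ^ n) i j = if m = i ∧ n = j then r else 0 := by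
  have h : (MvPolynomial.C r * X 0 ^ m * X 1 ^ n : P2) =
      monomial (Finsupp.single 0 m + Finsupp.single 1 n) r := by
    rw [X_pow_eq_monomial, X_pow_eq_monomial, mul_assoc, monomial_mul, C_mul_monomial]
    simp
  rw [cf, h, coeff_monomial]
  congr 1
  simp [Finsupp.ext_iff, Fin.forall_fin_two]

lemma cf_add (f g : P2) (i j : ℕ) : cf (f + g) i j = cf f i j + cf g i j :=
  coeff_add _ _ _

lemma cf_quartic (a b c d e : ℂ) (i j : ℕ) :
    cf (quartic a b c d e) i j =
      (if 4 = i ∧ 0 = j then a else 0) + (if 3 = i ∧ 1 = j then 4 * b else 0) +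
      (if 2 = i ∧ 2 = j then 6 * c else 0) + (if 1 = i ∧ 3 = j then 4 * d else 0) +
      (if 0 = i ∧ 4 = j then e else 0) := by
  have h : quartic a b c d e =
      MvPolynomial.C a * X 0 ^ 4 * X 1 ^ 0 + MvPolynomial.C (4 * b) * X 0 ^ 3 * X 1 ^ 1 +
      MvPolynomial.C (6 * c) * X 0 ^ 2 * X 1 ^ 2 + MvPolynomial.C (4 * d) * X 0 ^ 1 * X 1 ^ 3 +
      MvPolynomial.C e * X 0 ^ 0 * X 1 ^ 4 := by
    simp [quartic]
  simp only [h, cf_add, cf_quartic_term]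

lemma I2_quartic (a b c d e : ℂ) :
    I2 (quartic a b c d e) = a * e - 4 * b * d + 3 * c ^ 2 := by
  simp [I2, cf_quartic]

lemma I3_quartic (a b c d e : ℂ) :
    I3 (quartic a b c d e) =
      a * c * e + 2 * b * c * d - a * d ^ 2 - b ^ 2 * e - c ^ 3 := by
  simp [I3, cf_quartic]

/-- The Hessian of a binary quartic, written as a binary quartic with binomially normalised
coefficients. -/
lemma hess_quartic (a b c d e : ℂ) :
    hess (quartic a b c d e) =
      quartic (144 * (a * c - b ^ 2)) (72 * (a * d - b * c))
        (24 * (a * e + 2 * b * d - 3 * c ^ 2)) (72 * (b * e - c * d))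
        (144 * (c * e - d ^ 2)) := by
  have h01 : pderiv (0 : Fin 2) (X 1 : P2) = 0 := pderiv_X_of_ne (by decide)
  have h10 : pderiv (1 : Fin 2) (X 0 : P2) = 0 := pderiv_X_of_ne (by decide)
  simp only [hess, quartic, map_add, Derivation.leibniz, Derivation.leibniz_pow, pderiv_C,
    pderiv_X_self, h01, h10, smul_eq_mul, nsmul_eq_mul, mul_zero, add_zero, zero_add,
    mul_one, Derivation.map_natCast]
  simp only [map_mul, map_add, map_sub, map_pow, map_ofNat]
  push_cast
  ring

/-- invariants of the Hessian of a binary quartic: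
`I2(H(f)) = 2⁶·3³·I2(f)²`, `I3(H(f)) = 2¹⁰·3⁶·I3(f)² − 2⁹·3³·I2(f)³`, and
`H(H(f)) = 2¹⁰·3⁶·I3(f)·f − 2⁶·3³·I2(f)·H(f)`. -/
theorem invariants_of_hessian_quartic (a b c d e : ℂ) (f : P2)
    (hf : f = quartic a b c d e) :
    I2 (hess f) = 2 ^ 6 * 3 ^ 3 * I2 f ^ 2 ∧
    I3 (hess f) = 2 ^ 10 * 3 ^ 6 * I3 f ^ 2 - 2 ^ 9 * 3 ^ 3 * I2 f ^ 3 ∧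
    hess (hess f) =
      MvPolynomial.C (2 ^ 10 * 3 ^ 6 * I3 f) * f -
        MvPolynomial.C (2 ^ 6 * 3 ^ 3 * I2 f) * hess f := by
  subst hf
  rw [hess_quartic, hess_quartic, I2_quartic, I2_quartic, I3_quartic, I3_quartic]
  refine ⟨by ring, by ring, ?_⟩
  simp only [quartic, map_mul, map_add, map_sub, map_pow, map_ofNat]
  ring

end
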